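/- Let C be an arbitrary set of corner-interval minors of M. Then I(C) is a prime ideal if and only if I(C) = J_C. -/

import Mathlib

open MvPolynomial

/-- A 2-minor `[a₁,a₂|b₁,b₂]` (with `a₁ < a₂`, `b₁ < b₂`) of the `m × n` matrix
of indeterminates `M = (x_{ij})`. -/
structure Minor2 (m n : ℕ) where
  a1 : Fin m
  a2 : Fin m
  b1 : Fin n
  b2 : Fin n
  ha : a1 < a2
  hb : b1 < b2

namespace Minor2

variable {m n : ℕ}

/-- The vertex set of a 2-minor. -/
def vertexSet (δ : Minor2 m n) : Set (Fin m × Fin n) :=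
  {(δ.a1, δ.b1), (δ.a1, δ.b2), (δ.a2, δ.b1), (δ.a2, δ.b2)}

/-- `{p,q}` is one of the two vertical edges of the minor `δ`. -/
def VertEdge (δ : Minor2 m n) (p q : Fin m × Fin n) : Prop :=
  ({p, q} : Set (Fin m × Fin n)) = {(δ.a1, δ.b1), (δ.a2, δ.b1)} ∨
  ({p, q} : Set (Fin m × Fin n)) = {(δ.a1, δ.b2), (δ.a2, δ.b2)}

/-- `{p,q}` is one of the two horizontal edges of the minor `δ`. -/
def HorizEdge (δ : Minor2 m n) (p q : Fin m × Fin n) : Prop :=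
  ({p, q} : Set (Fin m × Fin n)) = {(δ.a1, δ.b1), (δ.a1, δ.b2)} ∨
  ({p, q} : Set (Fin m × Fin n)) = {(δ.a2, δ.b1), (δ.a2, δ.b2)}

/-- `{p,q}` is an edge (vertical or horizontal) of the minor `δ`. -/
def IsEdge (δ : Minor2 m n) (p q : Fin m × Fin n) : Prop :=
  δ.VertEdge p q ∨ δ.HorizEdge p q

/-- The binomial `f_δ = x_{a₁b₁}x_{a₂b₂} − x_{a₁b₂}x_{a₂b₁}` of the 2-minor `δ`. -/
noncomputable def binom (K : Type*) [Field K] (δ : Minor2 m n) : MvPolynomial (Fin m × Fin n) K :=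
  X (δ.a1, δ.b1) * X (δ.a2, δ.b2) - X (δ.a1, δ.b2) * X (δ.a2, δ.b1)

end Minor2

/-- The vertex set `V(C)` of a collection `C` of 2-minors. -/
def vertexSetOf {m n : ℕ} (C : Set (Minor2 m n)) : Set (Fin m × Fin n) :=
  ⋃ δ ∈ C, δ.vertexSet

/-- The binomial ideal `I(C)` generated by the binomials of the minors in `C`. -/
noncomputable def minorIdeal (K : Type*) [Field K] {m n : ℕ} (C : Set (Minor2 m n)) :
    Ideal (MvPolynomial (Fin m × Fin n) K) :=
  Ideal.span {f | ∃ δ ∈ C, f = Minor2.binom K δ}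

/-- Two positions are joined by a vertical edge of some minor of `C`. -/
def vertAdj {m n : ℕ} (C : Set (Minor2 m n)) (p q : Fin m × Fin n) : Prop :=
  ∃ δ ∈ C, δ.VertEdge p q

/-- Two positions are joined by a horizontal edge of some minor of `C`. -/
def horizAdj {m n : ℕ} (C : Set (Minor2 m n)) (p q : Fin m × Fin n) : Prop :=
  ∃ δ ∈ C, δ.HorizEdge p q

/-- The maximal vertical interval of `C` containing a position, encoded as the class of the
position under connectivity by vertical edges of minors of `C`. -/
def vClass {m n : ℕ} (C : Set (Minor2 m n)) (p : Fin m × Fin n) : Quot (vertAdj C) :=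
  Quot.mk _ p

/-- The maximal horizontal interval of `C` containing a position. -/
def hClass {m n : ℕ} (C : Set (Minor2 m n)) (p : Fin m × Fin n) : Quot (horizAdj C) :=
  Quot.mk _ p

/-- The monomial map `φ` with `φ(x_{ab}) = h_i v_j`, where `H_i` and `V_j` are the maximal
horizontal and vertical intervals of `C` containing `x_{ab}` (variables not appearing in any
minor of `C` are sent to products of fresh variables, so that the kernel of `φ` is the
extension to `S` of the toric ideal `J_C ⊆ S_C`). -/
noncomputable def phiC (K : Type*) [Field K] {m n : ℕ} (C : Set (Minor2 m n)) :
    MvPolynomial (Fin m × Fin n) K →ₐ[K]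
      MvPolynomial (Quot (horizAdj C) ⊕ Quot (vertAdj C)) K :=
  aeval fun p => X (Sum.inl (hClass C p)) * X (Sum.inr (vClass C p))

/-- The toric ideal `J_C = ker φ`. -/
noncomputable def toricIdeal (K : Type*) [Field K] {m n : ℕ} (C : Set (Minor2 m n)) :
    Ideal (MvPolynomial (Fin m × Fin n) K) :=
  RingHom.ker (phiC K C)

/-- A subset `W ⊆ V(C)` is admissible if for every `δ ∈ C` either `W ∩ V(δ) = ∅`
or `W` contains an edge of `δ`. -/
def Admissible {m n : ℕ} (C : Set (Minor2 m n)) (W : Set (Fin m × Fin n)) : Prop :=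
  W ⊆ vertexSetOf C ∧
    ∀ δ ∈ C, W ∩ δ.vertexSet = ∅ ∨ ∃ p q, p ∈ W ∧ q ∈ W ∧ δ.IsEdge p q

/-- `C' = {δ ∈ C : V(δ) ∩ W = ∅}`. -/
def minorsAvoiding {m n : ℕ} (C : Set (Minor2 m n)) (W : Set (Fin m × Fin n)) :
    Set (Minor2 m n) :=
  {δ ∈ C | δ.vertexSet ∩ W = ∅}

/-- The ideal generated by the variables with index in `W`. -/
noncomputable def varIdeal (K : Type*) [Field K] {m n : ℕ} (W : Set (Fin m × Fin n)) :
    Ideal (MvPolynomial (Fin m × Fin n) K) :=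
  Ideal.span ((fun p => (X p : MvPolynomial (Fin m × Fin n) K)) '' W)

/-- The prime ideal `P_W(C) = (x_{ij} : x_{ij} ∈ W) + J_{C'}`,
where `C' = {δ ∈ C : V(δ) ∩ W = ∅}`. -/
noncomputable def PW (K : Type*) [Field K] {m n : ℕ} (C : Set (Minor2 m n))
    (W : Set (Fin m × Fin n)) : Ideal (MvPolynomial (Fin m × Fin n) K) :=
  varIdeal K W + toricIdeal K (minorsAvoiding C W)

/-- A cycle `σ : h_{i₁}, v_{j₁}, h_{i₂}, v_{j₂}, …, h_{i_r}, v_{j_r}` (`r ≥ 2`) of the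
bipartite graph `G(C)`, recorded by the intersection vertices
`p k = H_{i_k} ∩ V_{j_k}` and `q k = H_{i_{k+1}} ∩ V_{j_k}` (indices cyclic, `r = len + 2`). -/
structure CycleIn {m n : ℕ} (C : Set (Minor2 m n)) where
  len : ℕ
  p : Fin (len + 2) → Fin m × Fin n
  q : Fin (len + 2) → Fin m × Fin n
  p_mem : ∀ k, p k ∈ vertexSetOf C
  q_mem : ∀ k, q k ∈ vertexSetOf C
  shareV : ∀ k, vClass C (p k) = vClass C (q k)
  shareH : ∀ k, hClass C (q k) = hClass C (p (k + 1))
  injH : Function.Injective fun k => hClass C (p k)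
  injV : Function.Injective fun k => vClass C (p k)

/-- The binomial `f_σ` associated to a cycle `σ` of `G(C)`. -/
noncomputable def cycleBinom (K : Type*) [Field K] {m n : ℕ} {C : Set (Minor2 m n)}
    (σ : CycleIn C) : MvPolynomial (Fin m × Fin n) K :=
  (∏ k, X (σ.p k)) - (∏ k, X (σ.q k))

/-!
The kernel `J_C` of a map between domains is prime, contains `I(C)` and contains no variable. For
the converse, let `P ⊇ I(C)` be a prime containing no variable. In the fraction field of `S ⧸ P` all
`x_{ab}` are invertible, and `f_δ = 0` says that the two vertical edges of `δ` have the same ratio.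
If every minor of `C` meets a fixed column `c`, then `x_{ab} / x_{ac}` is therefore constant along
vertical intervals, while `x_{ac}` depends only on the row `a`. So
`x_{ab} = x_{ac} · (x_{ab} / x_{ac})` has the form `h_i v_j`, the quotient map factors through `φ`,
and `J_C ⊆ P`; take `P = I(C)`.
-/

section Factorization

variable {m n : ℕ} {C : Set (Minor2 m n)}

theorem Minor2.VertEdge.apply_eq_apply {β : Type*} {δ : Minor2 m n} {p q : Fin m × Fin n}
    (hpq : δ.VertEdge p q) {g : Fin m × Fin n → β} (h₁ : g (δ.a1, δ.b1) = g (δ.a2, δ.b1))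
    (h₂ : g (δ.a1, δ.b2) = g (δ.a2, δ.b2)) : g p = g q := by
  simp only [VertEdge, Set.pair_eq_pair_iff] at hpq
  rcases hpq with (⟨rfl, rfl⟩ | ⟨rfl, rfl⟩) | (⟨rfl, rfl⟩ | ⟨rfl, rfl⟩)
  exacts [h₁, h₁.symm, h₂, h₂.symm]

theorem Minor2.HorizEdge.fst_eq {δ : Minor2 m n} {p q : Fin m × Fin n} (hpq : δ.HorizEdge p q) :
    p.1 = q.1 := by
  simp only [HorizEdge, Set.pair_eq_pair_iff] at hpq
  rcases hpq with (⟨rfl, rfl⟩ | ⟨rfl, rfl⟩) | (⟨rfl, rfl⟩ | ⟨rfl, rfl⟩) <;> rfl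

theorem exists_eq_hClass_mul_vClass {G : Type*} [CommGroup G] {c : Fin n}
    (hC : ∀ δ ∈ C, δ.b1 = c ∨ δ.b2 = c) (u : Fin m × Fin n → G)
    (hu : ∀ δ ∈ C, u (δ.a1, δ.b1) * u (δ.a2, δ.b2) = u (δ.a1, δ.b2) * u (δ.a2, δ.b1)) :
    ∃ (h : Quot (horizAdj C) → G) (v : Quot (vertAdj C) → G),
      ∀ p, u p = h (hClass C p) * v (vClass C p) := by
  have horiz_invariant : ∀ p q, horizAdj C p q → u (p.1, c) = u (q.1, c) := by
    rintro p q ⟨δ, -, hpq⟩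
    rw [hpq.fst_eq]
  have vert_invariant : ∀ p q, vertAdj C p q → u p / u (p.1, c) = u q / u (q.1, c) := by
    rintro p q ⟨δ, hδ, hpq⟩
    have hrel := hu δ hδ
    refine hpq.apply_eq_apply (g := fun p ↦ u p / u (p.1, c)) ?_ ?_ <;>
      rcases hC δ hδ with rfl | rfl
    · simp only [div_self']
    · rwa [div_eq_div_iff_mul_eq_mul, mul_comm (u (δ.a2, δ.b1))]
    · rw [div_eq_div_iff_mul_eq_mul, ← hrel, mul_comm]
    · simp only [div_self']
  exact ⟨Quot.lift _ horiz_invariant, Quot.lift _ vert_invariant,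
    fun p ↦ (mul_div_cancel (u (p.1, c)) (u p)).symm⟩

end Factorization

section ToricIdeal

variable {K : Type*} [Field K] {m n : ℕ} {C : Set (Minor2 m n)}

theorem Minor2.binom_mem_minorIdeal {δ : Minor2 m n} (hδ : δ ∈ C) :
    δ.binom K ∈ minorIdeal K C :=
  Ideal.subset_span ⟨δ, hδ, rfl⟩

theorem Minor2.binom_mem_toricIdeal {δ : Minor2 m n} (hδ : δ ∈ C) :
    δ.binom K ∈ toricIdeal K C := by
  have horiz₁ : hClass C (δ.a1, δ.b1) = hClass C (δ.a1, δ.b2) := Quot.sound ⟨δ, hδ, .inl rfl⟩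
  have horiz₂ : hClass C (δ.a2, δ.b1) = hClass C (δ.a2, δ.b2) := Quot.sound ⟨δ, hδ, .inr rfl⟩
  have vert₁ : vClass C (δ.a1, δ.b1) = vClass C (δ.a2, δ.b1) := Quot.sound ⟨δ, hδ, .inl rfl⟩
  have vert₂ : vClass C (δ.a1, δ.b2) = vClass C (δ.a2, δ.b2) := Quot.sound ⟨δ, hδ, .inr rfl⟩
  simp only [toricIdeal, RingHom.mem_ker, binom, phiC, map_sub, map_mul, aeval_X, horiz₁, horiz₂,
    vert₁, vert₂]
  ring

variable (K C)

theorem minorIdeal_le_toricIdeal : minorIdeal K C ≤ toricIdeal K C := by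
  refine Ideal.span_le.mpr ?_
  rintro _ ⟨δ, hδ, rfl⟩
  exact δ.binom_mem_toricIdeal hδ

theorem toricIdeal_isPrime : (toricIdeal K C).IsPrime :=
  RingHom.ker_isPrime _

theorem X_notMem_toricIdeal (p : Fin m × Fin n) : X p ∉ toricIdeal K C := by
  simp [toricIdeal, RingHom.mem_ker, phiC, X_ne_zero]

variable {K C}

theorem exists_comp_phiC_eq {A : Type*} [CommRing A] [Algebra K A] {c : Fin n}
    (hC : ∀ δ ∈ C, δ.b1 = c ∨ δ.b2 = c) {π : MvPolynomial (Fin m × Fin n) K →ₐ[K] A}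
    (hπ : minorIdeal K C ≤ RingHom.ker π) (hX : ∀ p, IsUnit (π (X p))) :
    ∃ ψ : MvPolynomial (Quot (horizAdj C) ⊕ Quot (vertAdj C)) K →ₐ[K] A,
      ψ.comp (phiC K C) = π := by
  choose u hu using hX
  have hrel : ∀ δ ∈ C,
      u (δ.a1, δ.b1) * u (δ.a2, δ.b2) = u (δ.a1, δ.b2) * u (δ.a2, δ.b1) := by
    intro δ hδ
    have hbinom : π (δ.binom K) = 0 := hπ (δ.binom_mem_minorIdeal hδ)
    simpa only [Minor2.binom, map_sub, map_mul, sub_eq_zero, ← hu, ← Units.val_mul,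
      Units.val_inj] using hbinom
  obtain ⟨h, v, huhv⟩ := exists_eq_hClass_mul_vClass hC u hrel
  refine ⟨aeval (Sum.elim (fun i ↦ (h i : A)) fun j ↦ (v j : A)), algHom_ext fun p ↦ ?_⟩
  simp only [AlgHom.comp_apply, phiC, aeval_X, map_mul, Sum.elim_inl, Sum.elim_inr, ← hu, huhv p,
    Units.val_mul]

theorem toricIdeal_le_of_isPrime {c : Fin n} (hC : ∀ δ ∈ C, δ.b1 = c ∨ δ.b2 = c)
    {P : Ideal (MvPolynomial (Fin m × Fin n) K)} [P.IsPrime] (hP : minorIdeal K C ≤ P)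
    (hX : ∀ p, X p ∉ P) : toricIdeal K C ≤ P := by
  let A := MvPolynomial (Fin m × Fin n) K ⧸ P
  let π : MvPolynomial (Fin m × Fin n) K →ₐ[K] FractionRing A :=
    (IsScalarTower.toAlgHom K A (FractionRing A)).comp (Ideal.Quotient.mkₐ K P)
  have mem_iff (f) : π f = 0 ↔ f ∈ P :=
    (FaithfulSMul.algebraMap_eq_zero_iff A (FractionRing A)).trans Ideal.Quotient.eq_zero_iff_mem
  obtain ⟨ψ, hψ⟩ := exists_comp_phiC_eq hC (π := π) (fun f hf ↦ (mem_iff f).mpr (hP hf))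
    fun p ↦ isUnit_iff_ne_zero.mpr <| (mem_iff _).not.mpr (hX p)
  intro f (hf : phiC K C f = 0)
  rw [← mem_iff, ← hψ, AlgHom.comp_apply, hf, map_zero]

end ToricIdeal

theorem statement3_general (K : Type*) [Field K] {m n : ℕ} (C : Set (Minor2 m n)) (c : Fin n)
    (hC : ∀ δ ∈ C, δ.b1 = c ∨ δ.b2 = c) :
    (minorIdeal K C).IsPrime ↔ minorIdeal K C = toricIdeal K C := by
  have hle : minorIdeal K C ≤ toricIdeal K C := minorIdeal_le_toricIdeal K C
  constructor
  · intro hprime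
    exact hle.antisymm <| toricIdeal_le_of_isPrime hC le_rfl
      fun p hp ↦ X_notMem_toricIdeal K C p (hle hp)
  · intro heq
    exact heq ▸ toricIdeal_isPrime K C

theorem statement3 (K : Type*) [Field K] (m n : ℕ) [NeZero n]
    (C : Set (Minor2 m n)) (hC : ∀ δ ∈ C, δ.b1 = 0) :
    (minorIdeal K C).IsPrime ↔ minorIdeal K C = toricIdeal K C :=
  statement3_general K C 0 fun δ hδ ↦ .inl (hC δ hδ)
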